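/- Fix an integer M ≥ 1, a real τ > 0, and constants c₁ > 0 and c₂ > 0. Define ϖ(θ) = (θ²·Γ̄(M, (θ/τ)²) − 2θτ·Γ̄(M + 1/2, (θ/τ)²) + τ²·Γ̄(M + 1, (θ/τ)²)) / Γ(M) and MSE(θ) = c₂·(M·τ² + θ²) + c₁·ϖ(θ) for θ ≥ 0. Then MSE is strictly convex on [0, ∞). -/

import Mathlib

/-- The upper incomplete gamma function `Γ̄(s, x) = ∫_x^∞ t^{s-1} e^{-t} dt`. -/
noncomputable def uGamma (s x : ℝ) : ℝ := ∫ t in Set.Ioi x, t ^ (s - 1) * Real.exp (-t)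

open MeasureTheory in
lemma uG_int (s x : ℝ) (hs : 0 < s) (hx : 0 ≤ x) :
    IntegrableOn (fun t : ℝ => t ^ (s - 1) * Real.exp (-t)) (Set.Ioi x) := by
  have h := Real.GammaIntegral_convergent hs
  refine (h.mono_set (Set.Ioi_subset_Ioi hx)).congr_fun (fun t _ => mul_comm _ _) measurableSet_Ioi

/-- integrand with the positive part -/
noncomputable def FF (M : ℕ) (τ θ t : ℝ) : ℝ :=
  (max (τ * √t - θ) 0) ^ 2 * (t ^ ((M : ℝ) - 1) * Real.exp (-t))

noncomputable def GG (M : ℕ) (τ θ t : ℝ) : ℝ :=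
  θ ^ 2 * (t ^ ((M : ℝ) - 1) * Real.exp (-t))
      - 2 * θ * τ * (t ^ ((M : ℝ) + 1 / 2 - 1) * Real.exp (-t))
      + τ ^ 2 * (t ^ ((M : ℝ) + 1 - 1) * Real.exp (-t))

lemma FF_eq (M : ℕ) (τ θ t : ℝ) (hτ : 0 < τ) (hθ : 0 ≤ θ) (ht : 0 < t) :
    FF M τ θ t = (Set.Ioi ((θ / τ) ^ 2)).indicator (GG M τ θ) t := by
  have hiff : (θ / τ) ^ 2 < t ↔ 0 < τ * √t - θ := by
    rw [← Real.lt_sqrt (by positivity), div_lt_iff₀ hτ, sub_pos, mul_comm]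
  by_cases h : (θ / τ) ^ 2 < t
  · rw [Set.indicator_of_mem (show t ∈ Set.Ioi _ from h)]
    have h1 : t ^ ((M : ℝ) + 1 / 2 - 1) = t ^ ((M : ℝ) - 1) * √t := by
      rw [Real.sqrt_eq_rpow, ← Real.rpow_add ht]; ring_nf
    have h2 : t ^ ((M : ℝ) + 1 - 1) = t ^ ((M : ℝ) - 1) * (√t) ^ 2 := by
      rw [Real.sq_sqrt ht.le, ← Real.rpow_add_one ht.ne']; ring_nf
    rw [FF, GG, h1, h2, max_eq_left (hiff.1 h).le]
    ring
  · rw [Set.indicator_of_notMem (show t ∉ Set.Ioi _ from h)]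
    rw [FF, max_eq_right (not_lt.1 (fun h' => h (hiff.2 h')))]
    ring

open MeasureTheory in
lemma GG_int (M : ℕ) (hM : 1 ≤ M) (τ θ x : ℝ) (hx : 0 ≤ x) :
    IntegrableOn (GG M τ θ) (Set.Ioi x) ∧
    ∫ t in Set.Ioi x, GG M τ θ t = θ ^ 2 * uGamma M x
      - 2 * θ * τ * uGamma (M + 1 / 2) x + τ ^ 2 * uGamma (M + 1) x := by
  have hM' : (0 : ℝ) < M := by exact_mod_cast hM
  have i1 := (uG_int (M : ℝ) x hM' hx).const_mul (θ ^ 2)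
  have i2 := (uG_int ((M : ℝ) + 1 / 2) x (by positivity) hx).const_mul (2 * θ * τ)
  have i3 := (uG_int ((M : ℝ) + 1) x (by positivity) hx).const_mul (τ ^ 2)
  refine ⟨(i1.sub i2).add i3, ?_⟩
  unfold GG uGamma
  rw [integral_add (by exact i1.sub i2) i3, integral_sub i1 i2, integral_const_mul, integral_const_mul,
    integral_const_mul]

open MeasureTheory in
lemma FF_int (M : ℕ) (hM : 1 ≤ M) (τ θ : ℝ) (hτ : 0 < τ) (hθ : 0 ≤ θ) :
    IntegrableOn (FF M τ θ) (Set.Ioi 0) ∧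
    ∫ t in Set.Ioi 0, FF M τ θ t = θ ^ 2 * uGamma M ((θ / τ) ^ 2)
      - 2 * θ * τ * uGamma (M + 1 / 2) ((θ / τ) ^ 2)
      + τ ^ 2 * uGamma (M + 1) ((θ / τ) ^ 2) := by
  have hx : 0 ≤ (θ / τ) ^ 2 := by positivity
  obtain ⟨a, b⟩ := GG_int M hM τ θ _ hx
  have he : Set.EqOn ((Set.Ioi ((θ / τ) ^ 2)).indicator (GG M τ θ)) (FF M τ θ) (Set.Ioi 0) :=
    fun t ht => (FF_eq M τ θ t hτ hθ ht).symm
  constructor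
  · exact ((integrable_indicator_iff measurableSet_Ioi).2 a).integrableOn.congr_fun he
      measurableSet_Ioi
  · rw [← b, ← setIntegral_congr_fun measurableSet_Ioi he, setIntegral_indicator measurableSet_Ioi,
      Set.inter_eq_right.2 (Set.Ioi_subset_Ioi hx)]

lemma FF_conv (M : ℕ) (τ t x y a b : ℝ) (ht : 0 < t) (ha : 0 ≤ a) (hb : 0 ≤ b)
    (hab : a + b = 1) : FF M τ (a * x + b * y) t ≤ a * FF M τ x t + b * FF M τ y t := by
  unfold FF
  have hw : 0 ≤ t ^ ((M : ℝ) - 1) * Real.exp (-t) := by positivity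
  set p := τ * √t
  have h1 : max (p - (a * x + b * y)) 0 ≤ a * max (p - x) 0 + b * max (p - y) 0 := by
    apply max_le
    · have e : p - (a * x + b * y) = a * (p - x) + b * (p - y) := by
        linear_combination (-p) * hab
      rw [e]
      gcongr <;> exact le_max_left _ _
    · positivity
  have h0 : 0 ≤ max (p - (a * x + b * y)) 0 := le_max_right _ _
  have h2 : (max (p - (a * x + b * y)) 0) ^ 2
      ≤ a * (max (p - x) 0) ^ 2 + b * (max (p - y) 0) ^ 2 := by
    refine (pow_le_pow_left₀ h0 h1 2).trans ?_
    generalize max (p - x) 0 = u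
    generalize max (p - y) 0 = v
    obtain rfl : b = 1 - a := by linarith
    nlinarith [mul_nonneg (mul_nonneg ha hb) (sq_nonneg (u - v))]
  calc _ ≤ (a * (max (p - x) 0) ^ 2 + b * (max (p - y) 0) ^ 2)
        * (t ^ ((M : ℝ) - 1) * Real.exp (-t)) := mul_le_mul_of_nonneg_right h2 hw
    _ = _ := by ring

open MeasureTheory in
theorem FF_convexOn (M : ℕ) (hM : 1 ≤ M) (τ : ℝ) (hτ : 0 < τ) :
    ConvexOn ℝ (Set.Ici 0) (fun θ => ∫ t in Set.Ioi 0, FF M τ θ t) := by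
  refine ⟨convex_Ici 0, fun x hx y hy a b ha hb hab => ?_⟩
  have hx' : 0 ≤ x := hx
  have hy' : 0 ≤ y := hy
  have ix := (FF_int M hM τ x hτ hx').1.const_mul a
  have iy := (FF_int M hM τ y hτ hy').1.const_mul b
  have iz := (FF_int M hM τ (a * x + b * y) hτ (by positivity)).1
  simp only [smul_eq_mul]
  rw [← integral_const_mul, ← integral_const_mul, ← integral_add ix iy]
  exact setIntegral_mono_on iz (ix.add iy) measurableSet_Ioi
    (fun t ht => FF_conv M τ t x y a b ht ha hb hab)

/-- For `M ≥ 1`, `τ > 0`, `c₁, c₂ > 0`, the worst-case MSE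
`MSE(θ) = c₂·(M·τ² + θ²) + c₁·ϖ(θ)`, with
`ϖ(θ) = (θ²·Γ̄(M,(θ/τ)²) − 2θτ·Γ̄(M+1/2,(θ/τ)²) + τ²·Γ̄(M+1,(θ/τ)²)) / Γ(M)`,
is strictly convex on `[0,∞)`. -/
theorem mse_strictConvexOn
    (M : ℕ) (hM : 1 ≤ M) (τ : ℝ) (hτ : 0 < τ) (c₁ c₂ : ℝ) (hc₁ : 0 < c₁) (hc₂ : 0 < c₂)
    (ϖ MSE : ℝ → ℝ)
    (hϖ : ∀ θ, ϖ θ = (θ ^ 2 * uGamma M ((θ / τ) ^ 2)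
      - 2 * θ * τ * uGamma (M + 1 / 2) ((θ / τ) ^ 2)
      + τ ^ 2 * uGamma (M + 1) ((θ / τ) ^ 2)) / Real.Gamma M)
    (hMSE : ∀ θ, MSE θ = c₂ * (M * τ ^ 2 + θ ^ 2) + c₁ * ϖ θ) :
    StrictConvexOn ℝ (Set.Ici 0) MSE := by
  have hG : 0 < Real.Gamma M := Real.Gamma_pos_of_pos (by exact_mod_cast hM)
  have hconv := (FF_convexOn M hM τ hτ).smul (c := c₁ / Real.Gamma M) (by positivity)
  have hq : StrictConvexOn ℝ (Set.Ici 0) (fun θ : ℝ => c₂ * (M * τ ^ 2 + θ ^ 2)) := by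
    refine ⟨convex_Ici 0, fun x _ y _ hxy a b ha hb hab => ?_⟩
    simp only [smul_eq_mul]
    have h1 : 0 < c₂ * (a * b * (x - y) ^ 2) := by
      have : 0 < (x - y) ^ 2 := by have := sub_ne_zero.2 hxy; positivity
      positivity
    obtain rfl : b = 1 - a := by linarith
    nlinarith [h1]
  refine (hq.add_convexOn hconv).congr (fun θ hθ => ?_)
  have := (FF_int M hM τ θ hτ hθ).2
  simp only [Pi.add_apply, smul_eq_mul]
  rw [hMSE, hϖ, this]
  ring
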